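/- Let μ be a Borel probability measure on Circle admitting a sequence (p_n)_{n≥0} of orthonormal Laurent polynomials. Suppose there exist an integer r with 1 ≤ r ≤ 2, Laurent polynomials D_0, ..., D_r with D_r not the zero Laurent polynomial, and a function λ : ℕ → ℂ such that for every n ≥ 0 and every z ∈ ℂ with z ≠ 0 one has Σ_{k=0}^r D_k(z)·p_n^{(k)}(z) = λ(n)·p_n(z). Then μ is the normalized Lebesgue (Haar) probability measure on Circle. -/

import Mathlib

/-! Write `L = D₀ + D₁ d/dz + D₂ d²/dz²`. Since `p 0, …, p n` span the same space as
`z ^ σ(0), …, z ^ σ(n)`, that space is `L`-invariant for every `n` (`opCoeff_triangular`). The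
coefficient of `z ^ (i + j)` in `L (z ^ i)` is a polynomial of degree at most two in `i`; invariance
makes it vanish for all `i ≥ 0` when `j > 0` and for all `i < 0` when `j < 0`, so it vanishes
identically for `j ≠ 0` (`coeff_eq_zero_of_triangular`). Hence `L (z ^ i) = Q(i) z ^ i` with
`Q(i) = A + B i + C i (i - 1)` and `(B, C) ≠ 0`.

If `z ^ l` occurs in `p n` then `Q(l) = Q(σ(n))`, so `l = σ(n)` or `l + σ(n)` equals a constant that
depends only on `Q`. For even `n` the sum `l + σ(n)` is nonnegative and for odd `n` it is negative,
so either all `p n` with `n` even or all `p n` with `n` odd are monomials (`monomial_side`).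
Orthogonality to the constant `p 0` then annihilates all moments of positive order, or all of
negative order, and by conjugation all moments of nonzero order. Such a measure is Haar measure
because trigonometric polynomials separate finite measures (`circle_measure_ext`). -/


open MeasureTheory
open scoped ComplexConjugate

noncomputable section

/-- The function associated to a Laurent polynomial given by its finitely
supported family of coefficients: `p(z) = Σ_{i ∈ ℤ} a_i z^i`. -/
def lval (a : ℤ →₀ ℂ) (z : ℂ) : ℂ := a.sum fun i c => c * z ^ i

/-- The ordering `1, z⁻¹, z, z⁻², z², …` of the monomials:
`σ(0) = 0`, `σ(2m) = m`, `σ(2m−1) = −m`. -/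
def olpIdx (n : ℕ) : ℤ := if n % 2 = 0 then ((n / 2 : ℕ) : ℤ) else -(((n + 1) / 2 : ℕ) : ℤ)

/-- The Borel measurable structure on the unit circle. -/
instance : MeasurableSpace Circle := borel Circle

instance : BorelSpace Circle := ⟨rfl⟩

/-- `p` is a sequence of orthonormal Laurent polynomials for the measure `μ` on the
unit circle: the `p n` are orthonormal in `L²(μ)`, `p n` is a linear combination of
the monomials `z^{σ(0)}, …, z^{σ(n)}`, and the coefficient of `z^{σ(n)}` is nonzero. -/
def IsOLP (μ : Measure Circle) (p : ℕ → (ℤ →₀ ℂ)) : Prop :=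
  (∀ n k : ℕ, ∫ z : Circle, lval (p n) (z : ℂ) * conj (lval (p k) (z : ℂ)) ∂μ
      = if n = k then 1 else 0)
  ∧ (∀ n : ℕ, ∀ i ∈ (p n).support, i ∈ (Finset.range (n + 1)).image olpIdx)
  ∧ (∀ n : ℕ, p n (olpIdx n) ≠ 0)

end

/-! ### Laurent polynomials as functions -/

/-- Evaluation at `z` as a linear map in the coefficient family. -/
theorem lval_eq_linearCombination (a : ℤ →₀ ℂ) (z : ℂ) :
    lval a z = Finsupp.linearCombination ℂ (fun i : ℤ => z ^ i) a := by
  simp [lval, Finsupp.linearCombination_apply]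

theorem lval_single (i : ℤ) (c z : ℂ) : lval (Finsupp.single i c) z = c * z ^ i := by
  simp [lval]

theorem lval_shift (a : ℤ →₀ ℂ) (j : ℤ) {z : ℂ} (hz : z ≠ 0) :
    lval (a.equivMapDomain (Equiv.addRight j)) z = lval a z * z ^ j := by
  rw [Finsupp.equivMapDomain_eq_mapDomain, lval_eq_linearCombination,
    Finsupp.linearCombination_mapDomain, lval, Finsupp.linearCombination_apply,
    Finsupp.sum, Finsupp.sum, Finset.sum_mul]
  refine Finset.sum_congr rfl fun i _ => ?_
  simp [zpow_add₀ hz, mul_assoc]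

/-- A Laurent polynomial is determined by its values off the origin, because the characters
`z ↦ z ^ i` of `ℂˣ` are pairwise distinct and hence linearly independent. -/
theorem eq_of_lval_eq {a b : ℤ →₀ ℂ} (h : ∀ z : ℂ, z ≠ 0 → lval a z = lval b z) : a = b := by
  let χ : ℤ → (ℂˣ →* ℂ) := fun i => (Units.coeHom ℂ).comp (zpowGroupHom i)
  have hχ : Function.Injective χ := by
    intro i j hij
    have h2 := DFunLike.congr_fun hij (Units.mk0 (2 : ℂ) two_ne_zero)
    have h3 : (2 : ℂ) ^ i = (2 : ℂ) ^ j := by simpa [χ] using h2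
    have h4 : (2 : ℝ) ^ i = (2 : ℝ) ^ j := by simpa using congrArg norm h3
    exact zpow_right_injective₀ (by norm_num) (by norm_num) h4
  have hli := (linearIndependent_monoidHom ℂˣ ℂ).comp χ hχ
  apply hli
  funext u
  have hu := h u u.ne_zero
  simp only [lval_eq_linearCombination, Finsupp.linearCombination_apply, Finsupp.sum] at hu ⊢
  simpa [χ, Finset.sum_apply] using hu

theorem hasDerivAt_lval (a : ℤ →₀ ℂ) {z : ℂ} (hz : z ≠ 0) :
    HasDerivAt (lval a) (a.sum fun i c => c * (i * z ^ (i - 1))) z := by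
  unfold lval Finsupp.sum
  exact HasDerivAt.fun_sum fun i _ => (hasDerivAt_zpow i z (Or.inl hz)).const_mul _

theorem deriv_lval (a : ℤ →₀ ℂ) {z : ℂ} (hz : z ≠ 0) :
    iteratedDeriv 1 (lval a) z = a.sum fun i c => c * (i * z ^ (i - 1)) := by
  rw [iteratedDeriv_one, (hasDerivAt_lval a hz).deriv]

theorem deriv_two_lval (a : ℤ →₀ ℂ) {z : ℂ} (hz : z ≠ 0) :
    iteratedDeriv 2 (lval a) z = a.sum fun i c => c * (i * (i - 1) * z ^ (i - 2)) := by
  rw [iteratedDeriv_succ, iteratedDeriv_one]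
  have hev : deriv (lval a) =ᶠ[nhds z] fun w => a.sum fun i c => c * (i * w ^ (i - 1)) := by
    filter_upwards [isOpen_ne.mem_nhds hz] with w hw
    exact (hasDerivAt_lval a hw).deriv
  rw [hev.deriv_eq]
  unfold Finsupp.sum
  refine (HasDerivAt.fun_sum fun i _ => ?_).deriv
  have := ((hasDerivAt_zpow (i - 1) z (Or.inl hz)).const_mul (i : ℂ)).const_mul (a i)
  refine this.congr_deriv (?_ : _ = a i * (i * (i - 1) * z ^ (i - 2)))
  rw [show i - 1 - 1 = i - 2 by ring]
  push_cast
  ring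

/-! ### The operator in the monomial basis -/

/-- The `(l, i)` matrix entry, in the basis of monomials, of the operator
`L = D₀ + D₁ d/dz + D₂ d²/dz²`: the coefficient of `z ^ l` in `L (z ^ i)`. -/
noncomputable def opCoeff (D₀ D₁ D₂ : ℤ →₀ ℂ) (l i : ℤ) : ℂ :=
  D₀ (l - i) + i * D₁ (l - i + 1) + i * (i - 1) * D₂ (l - i + 2)

/-- The Laurent polynomial `L (z ^ i)` for `L = D₀ + D₁ d/dz + D₂ d²/dz²`. -/
noncomputable def opMono (D₀ D₁ D₂ : ℤ →₀ ℂ) (i : ℤ) : ℤ →₀ ℂ :=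
  D₀.equivMapDomain (Equiv.addRight i) + (i : ℂ) • D₁.equivMapDomain (Equiv.addRight (i - 1))
    + ((i : ℂ) * (i - 1)) • D₂.equivMapDomain (Equiv.addRight (i - 2))

theorem opMono_apply (D₀ D₁ D₂ : ℤ →₀ ℂ) (l i : ℤ) :
    opMono D₀ D₁ D₂ i l = opCoeff D₀ D₁ D₂ l i := by
  have e : ∀ j : ℤ, (Equiv.addRight j).symm l = l - j := fun j => by
    simp [sub_eq_add_neg]
  have h1 : l - (i - 1) = l - i + 1 := by ring
  have h2 : l - (i - 2) = l - i + 2 := by ring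
  simp only [opMono, opCoeff, Finsupp.add_apply, Finsupp.smul_apply, smul_eq_mul,
    Finsupp.equivMapDomain_apply, e, h1, h2]

/-- The differential equation `L a = c a`, read off coefficient by coefficient. -/
theorem coeff_eq_of_eigen {D₀ D₁ D₂ a : ℤ →₀ ℂ} {c : ℂ}
    (h : ∀ z : ℂ, z ≠ 0 → lval D₀ z * lval a z + lval D₁ z * iteratedDeriv 1 (lval a) z
      + lval D₂ z * iteratedDeriv 2 (lval a) z = c * lval a z) (l : ℤ) :
    (a.sum fun i x => x * opCoeff D₀ D₁ D₂ l i) = c * a l := by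
  have key : (Finsupp.linearCombination ℂ (opMono D₀ D₁ D₂)) a = c • a := by
    apply eq_of_lval_eq
    intro z hz
    have hm : ∀ i, lval (opMono D₀ D₁ D₂ i) z = lval D₀ z * z ^ i
        + lval D₁ z * (i * z ^ (i - 1)) + lval D₂ z * (i * (i - 1) * z ^ (i - 2)) := by
      intro i
      rw [mul_left_comm (lval D₁ z), mul_left_comm (lval D₂ z), ← lval_shift _ _ hz,
        ← lval_shift _ _ hz, ← lval_shift _ _ hz]
      simp only [lval_eq_linearCombination, opMono, map_add, map_smul, smul_eq_mul]
    have hz' := h z hz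
    rw [deriv_lval a hz, deriv_two_lval a hz] at hz'
    rw [lval_eq_linearCombination (c • a), map_smul, smul_eq_mul, ← lval_eq_linearCombination,
      ← hz', lval_eq_linearCombination _ z,
      Finsupp.linearCombination_apply ℂ (v := opMono D₀ D₁ D₂), Finsupp.sum, map_sum]
    simp only [map_smul, smul_eq_mul, ← lval_eq_linearCombination, hm]
    rw [lval.eq_def a]
    simp only [Finsupp.sum, Finset.mul_sum, ← Finset.sum_add_distrib]
    exact Finset.sum_congr rfl fun i _ => by ring
  have := DFunLike.congr_fun key l
  rw [Finsupp.linearCombination_apply, Finsupp.sum, Finsupp.finsetSum_apply] at this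
  simpa [opMono_apply, Finsupp.sum] using this

/-! ### Triangularity forces the operator to be diagonal -/

/-- `L` maps each monomial `z ^ σ(n)` into the span of `z ^ σ(0), …, z ^ σ(n)`, since the
eigenfunctions `p 0, …, p n` span the same space. -/
theorem opCoeff_triangular {D₀ D₁ D₂ : ℤ →₀ ℂ} {p : ℕ → (ℤ →₀ ℂ)} {lam : ℕ → ℂ}
    (hsupp : ∀ n : ℕ, ∀ i ∈ (p n).support, i ∈ (Finset.range (n + 1)).image olpIdx)
    (hlead : ∀ n : ℕ, p n (olpIdx n) ≠ 0)
    (hco : ∀ n l, ((p n).sum fun i x => x * opCoeff D₀ D₁ D₂ l i) = lam n * p n l)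
    (n : ℕ) (l : ℤ) (hl : l ∉ (Finset.range (n + 1)).image olpIdx) :
    opCoeff D₀ D₁ D₂ l (olpIdx n) = 0 := by
  induction n using Nat.strong_induction_on with
  | _ n ih =>
    have h := hco n l
    have hpl : p n l = 0 := by
      by_contra h0
      exact hl (hsupp n l (Finsupp.mem_support_iff.2 h0))
    rw [hpl, mul_zero, Finsupp.sum, Finset.sum_eq_single (olpIdx n)] at h
    · exact (mul_eq_zero.1 h).resolve_left (hlead n)
    · intro i hi hin
      obtain ⟨k, hk, rfl⟩ := Finset.mem_image.1 (hsupp n i hi)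
      have hkn : k < n := lt_of_le_of_ne (Nat.lt_succ_iff.1 (Finset.mem_range.1 hk))
        fun e => hin (by rw [e])
      rw [ih k hkn, mul_zero]
      refine fun hmem => hl (Finset.image_subset_image ?_ hmem)
      exact Finset.range_subset_range.2 (by lia)
    · intro hn
      exact absurd (Finsupp.notMem_support_iff.1 hn) (hlead n)

theorem olpIdx_even (m : ℕ) : olpIdx (2 * m) = m := by simp [olpIdx]

theorem olpIdx_odd (m : ℕ) : olpIdx (2 * m + 1) = -(m + 1 : ℤ) := by
  unfold olpIdx
  rw [if_neg (by lia)]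
  lia

theorem bounds_even {m : ℕ} {l : ℤ} (h : l ∈ (Finset.range (2 * m + 1)).image olpIdx) :
    -(m : ℤ) ≤ l ∧ l ≤ m := by
  obtain ⟨k, hk, rfl⟩ := Finset.mem_image.1 h
  have := Finset.mem_range.1 hk
  unfold olpIdx
  split_ifs <;> lia

theorem bounds_odd {m : ℕ} {l : ℤ} (h : l ∈ (Finset.range (2 * m + 1 + 1)).image olpIdx) :
    -(m + 1 : ℤ) ≤ l ∧ l ≤ m := by
  obtain ⟨k, hk, rfl⟩ := Finset.mem_image.1 h
  have := Finset.mem_range.1 hk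
  unfold olpIdx
  split_ifs <;> lia

/-- A triangular operator has monomial coefficients `D_k = d_k z ^ k`: for a fixed shift `j`,
the entry `(i + j, i)` is a quadratic polynomial in `i`, and it vanishes for all `i ≥ 0` if `j > 0`
and for all `i < 0` if `j < 0`. -/
theorem coeff_eq_zero_of_triangular {D₀ D₁ D₂ : ℤ →₀ ℂ}
    (htri : ∀ (n : ℕ) (l : ℤ), l ∉ (Finset.range (n + 1)).image olpIdx →
      opCoeff D₀ D₁ D₂ l (olpIdx n) = 0) (j : ℤ) (hj : j ≠ 0) :
    D₀ j = 0 ∧ D₁ (j + 1) = 0 ∧ D₂ (j + 2) = 0 := by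
  rcases lt_or_gt_of_ne hj with hneg | hpos
  · have h : ∀ m : ℕ, opCoeff D₀ D₁ D₂ (-(m + 1 : ℤ) + j) (-(m + 1 : ℤ)) = 0 := by
      intro m
      rw [← olpIdx_odd]
      refine htri _ _ fun hm => ?_
      have := bounds_odd hm
      rw [olpIdx_odd] at this
      lia
    have h0 := h 0
    have h1 := h 1
    have h2 := h 2
    simp only [opCoeff, add_sub_cancel_left] at h0 h1 h2
    push_cast at h0 h1 h2
    refine ⟨?_, ?_, ?_⟩ <;> grind
  · have h : ∀ m : ℕ, opCoeff D₀ D₁ D₂ ((m : ℤ) + j) (m : ℤ) = 0 := by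
      intro m
      rw [← olpIdx_even]
      refine htri _ _ fun hm => ?_
      have := bounds_even hm
      rw [olpIdx_even] at this
      lia
    have h0 := h 0
    have h1 := h 1
    have h2 := h 2
    simp only [opCoeff, add_sub_cancel_left] at h0 h1 h2
    push_cast at h0 h1 h2
    refine ⟨?_, ?_, ?_⟩ <;> grind

/-- The conclusion of the algebraic part: on one of the two sides, every `p n` is a monomial.
A coefficient `p n l ≠ 0` with `l ≠ σ(n)` gives `B + C (l + σ(n) - 1) = 0` with
`(B, C) = (D₁ 1, D₂ 2) ≠ 0`, which fixes `l + σ(n)`; this sum is `≥ 0` for even `n` and `< 0` for odd `n`. -/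
theorem monomial_side {D₀ D₁ D₂ : ℤ →₀ ℂ} {p : ℕ → (ℤ →₀ ℂ)} {lam : ℕ → ℂ}
    (hD : D₁ ≠ 0 ∨ D₂ ≠ 0)
    (hsupp : ∀ n : ℕ, ∀ i ∈ (p n).support, i ∈ (Finset.range (n + 1)).image olpIdx)
    (hlead : ∀ n : ℕ, p n (olpIdx n) ≠ 0)
    (hco : ∀ n l, ((p n).sum fun i x => x * opCoeff D₀ D₁ D₂ l i) = lam n * p n l) :
    (∀ m : ℕ, ∀ l : ℤ, l ≠ m → p (2 * m) l = 0) ∨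
      (∀ m : ℕ, ∀ l : ℤ, l ≠ -(m + 1 : ℤ) → p (2 * m + 1) l = 0) := by
  have hz := coeff_eq_zero_of_triangular (opCoeff_triangular hsupp hlead hco)
  have hBC : D₁ 1 ≠ 0 ∨ D₂ 2 ≠ 0 := by
    refine hD.imp (fun h h1 => h (Finsupp.ext fun i => ?_)) (fun h h1 => h (Finsupp.ext fun i => ?_))
    · by_cases hi : i = 1
      · simp [hi, h1]
      · simpa using (hz (i - 1) (by lia)).2.1
    · by_cases hi : i = 2
      · simp [hi, h1]
      · simpa using (hz (i - 2) (by lia)).2.2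
  have hdiag : ∀ n l, p n l * opCoeff D₀ D₁ D₂ l l = lam n * p n l := by
    intro n l
    rw [← hco n l, Finsupp.sum, Finset.sum_eq_single l]
    · intro i _ hi
      obtain ⟨h0, h1, h2⟩ := hz (l - i) (sub_ne_zero.2 hi.symm)
      simp [opCoeff, h0, h1, h2]
    · intro hl
      simp [Finsupp.notMem_support_iff.1 hl]
  have hsum : ∀ n l, l ≠ olpIdx n → p n l ≠ 0 →
      D₁ 1 + D₂ 2 * (((l + olpIdx n : ℤ) : ℂ) - 1) = 0 := by
    intro n l hl hp
    have e1 : opCoeff D₀ D₁ D₂ l l = lam n := by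
      have := hdiag n l
      rw [mul_comm] at this
      exact mul_right_cancel₀ hp this
    have e2 : opCoeff D₀ D₁ D₂ (olpIdx n) (olpIdx n) = lam n := by
      have := hdiag n (olpIdx n)
      rw [mul_comm] at this
      exact mul_right_cancel₀ (hlead n) this
    have hne : (l : ℂ) - (olpIdx n : ℂ) ≠ 0 := sub_ne_zero.2 (by exact_mod_cast hl)
    refine (mul_eq_zero.1 (?_ : ((l : ℂ) - (olpIdx n : ℂ)) * _ = 0)).resolve_left hne
    simp only [opCoeff, sub_self, zero_add] at e1 e2
    push_cast
    linear_combination e1 - e2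
  by_contra! hcon
  obtain ⟨⟨m, l, hl, hpl⟩, m', l', hl', hpl'⟩ := hcon
  have b := bounds_even (hsupp _ l (Finsupp.mem_support_iff.2 hpl))
  have b' := bounds_odd (hsupp _ l' (Finsupp.mem_support_iff.2 hpl'))
  have s := hsum (2 * m) l (by rwa [olpIdx_even]) hpl
  have s' := hsum (2 * m' + 1) l' (by rwa [olpIdx_odd]) hpl'
  rw [olpIdx_even] at s
  rw [olpIdx_odd] at s'
  have hne : ((l + m : ℤ) : ℂ) - ((l' + -(m' + 1 : ℤ) : ℤ) : ℂ) ≠ 0 :=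
    sub_ne_zero.2 (by intro h; have := Int.cast_injective h; lia)
  have hC : D₂ 2 = 0 := by
    refine (mul_eq_zero.1 (?_ : D₂ 2 * _ = 0)).resolve_right hne
    linear_combination s - s'
  have hB : D₁ 1 = 0 := by simpa [hC] using s
  exact hBC.elim (· hB) (· hC)

/-! ### Moments and measures on the circle -/

/-- The character `z ↦ z ^ n` of the circle as a bounded continuous function. -/
noncomputable def circleChar (n : ℤ) : BoundedContinuousFunction Circle ℂ :=
  BoundedContinuousFunction.mkOfCompact
    ⟨fun z : Circle => ((z ^ n : Circle) : ℂ), continuous_subtype_val.comp (continuous_zpow n)⟩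

theorem circleChar_apply (n : ℤ) (z : Circle) : circleChar n z = (z : ℂ) ^ n := by
  simp [circleChar]

/-- The star subalgebra of trigonometric polynomials on the circle. -/
noncomputable def circleAlg : StarSubalgebra ℂ (BoundedContinuousFunction Circle ℂ) where
  toSubalgebra := Algebra.adjoin ℂ (Set.range circleChar)
  star_mem' := by
    change Algebra.adjoin ℂ (Set.range circleChar) ≤
      star (Algebra.adjoin ℂ (Set.range circleChar))
    refine Algebra.adjoin_le ?_
    rintro - ⟨n, rfl⟩
    refine Algebra.subset_adjoin ⟨-n, ?_⟩
    ext z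
    simp [circleChar_apply, ← Circle.coe_inv_eq_conj]

theorem circleAlg_toSubmodule :
    Subalgebra.toSubmodule circleAlg.toSubalgebra = Submodule.span ℂ (Set.range circleChar) := by
  apply Algebra.adjoin_eq_span_of_subset
  refine Set.Subset.trans ?_ Submodule.subset_span
  intro x hx
  refine Submonoid.closure_induction (fun _ => id) ⟨0, ?_⟩ ?_ hx
  · ext z
    simp [circleChar_apply]
  · rintro - - - - ⟨m, rfl⟩ ⟨n, rfl⟩
    refine ⟨m + n, ?_⟩
    ext z
    simp [circleChar_apply, zpow_add₀]

/-- Finite measures on the circle with the same trigonometric moments are equal. -/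
theorem circle_measure_ext {μ ν : Measure Circle} [IsFiniteMeasure μ] [IsFiniteMeasure ν]
    (h : ∀ n : ℤ, ∫ z : Circle, (z : ℂ) ^ n ∂μ = ∫ z : Circle, (z : ℂ) ^ n ∂ν) : μ = ν := by
  refine ext_of_forall_mem_subalgebra_integral_eq_of_pseudoEMetric_complete_countable
    (𝕜 := ℂ) (A := circleAlg) ?_ ?_
  · intro x y hxy
    refine ⟨fun z : Circle => circleChar 1 z, ⟨(circleChar 1).toContinuousMap, ?_, rfl⟩, ?_⟩
    · exact ⟨circleChar 1, Algebra.subset_adjoin ⟨1, rfl⟩, rfl⟩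
    · simpa [circleChar_apply] using fun e => hxy (Circle.ext e)
  · intro g hg
    have hg' : g ∈ Submodule.span ℂ (Set.range circleChar) := by
      rw [← circleAlg_toSubmodule]
      exact hg
    induction hg' using Submodule.span_induction with
    | mem x hx =>
      obtain ⟨n, rfl⟩ := hx
      simpa only [circleChar_apply] using h n
    | zero => simp
    | add x y hx hy ihx ihy =>
      rw [← circleAlg_toSubmodule] at hx hy
      simp only [BoundedContinuousFunction.coe_add, Pi.add_apply]
      rw [integral_add (x.integrable _) (y.integrable _),
        integral_add (x.integrable _) (y.integrable _), ihx hx, ihy hy]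
    | smul c x hx ihx =>
      rw [← circleAlg_toSubmodule] at hx
      simp only [BoundedContinuousFunction.coe_smul, integral_smul, ihx hx]

theorem isProbabilityMeasure_haar_circle :
    IsProbabilityMeasure (Measure.haarMeasure (⊤ : TopologicalSpace.PositiveCompacts Circle)) :=
  ⟨by simpa using Measure.haarMeasure_self (K₀ := (⊤ : TopologicalSpace.PositiveCompacts Circle))⟩

theorem haar_circle_moment {n : ℤ} (hn : n ≠ 0) :
    ∫ z : Circle, (z : ℂ) ^ n
      ∂(Measure.haarMeasure (⊤ : TopologicalSpace.PositiveCompacts Circle)) = 0 := by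
  -- Rotation by `g = exp (iπ / n)` changes the sign of `z ^ n`.
  refine integral_eq_zero_of_mul_left_eq_neg (g := Circle.exp (Real.pi / n)) fun z => ?_
  have hn' : (n : ℂ) ≠ 0 := by exact_mod_cast hn
  rw [Circle.coe_mul, mul_zpow, Circle.coe_exp, ← Complex.exp_int_mul]
  have : (n : ℂ) * (((Real.pi / n : ℝ) : ℂ) * Complex.I) = Real.pi * Complex.I := by
    push_cast
    field_simp
  rw [this, Complex.exp_pi_mul_I]
  ring

theorem eq_haar_of_moments {μ : Measure Circle} [IsProbabilityMeasure μ]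
    (h : ∀ n : ℤ, n ≠ 0 → ∫ z : Circle, (z : ℂ) ^ n ∂μ = 0) :
    μ = Measure.haarMeasure ⊤ := by
  have := isProbabilityMeasure_haar_circle
  refine circle_measure_ext fun n => ?_
  by_cases hn : n = 0
  · simp [hn]
  · rw [h n hn, haar_circle_moment hn]

theorem moment_neg (μ : Measure Circle) {n : ℤ} (h : ∫ z : Circle, (z : ℂ) ^ n ∂μ = 0) :
    ∫ z : Circle, (z : ℂ) ^ (-n) ∂μ = 0 := by
  have e : ∀ z : Circle, (z : ℂ) ^ (-n) = conj ((z : ℂ) ^ n) := fun z => by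
    rw [map_zpow₀, ← Circle.coe_inv_eq_conj, Circle.coe_inv, inv_zpow, zpow_neg]
  simp_rw [e]
  rw [integral_conj, h, map_zero]

/-- If `p n` is a multiple of `z ^ σ(n)`, its orthogonality to the constant `p 0` says that the
moment of order `σ(n)` vanishes. -/
theorem moment_of_monomial {μ : Measure Circle} {p : ℕ → (ℤ →₀ ℂ)} (hp : IsOLP μ p)
    {n : ℕ} (hn : n ≠ 0) (h : ∀ l, l ≠ olpIdx n → p n l = 0) :
    ∫ z : Circle, (z : ℂ) ^ olpIdx n ∂μ = 0 := by
  obtain ⟨horth, hsupp, hlead⟩ := hp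
  have h0 : p 0 = Finsupp.single 0 (p 0 0) := by
    ext l
    by_cases hl : l = 0
    · simp [hl]
    · rw [Finsupp.single_eq_of_ne hl]
      by_contra hne
      have := hsupp 0 l (Finsupp.mem_support_iff.2 hne)
      simp [olpIdx] at this
      exact hl this
  have hn' : p n = Finsupp.single (olpIdx n) (p n (olpIdx n)) := by
    ext l
    by_cases hl : l = olpIdx n
    · simp [hl]
    · rw [Finsupp.single_eq_of_ne hl, h l hl]
  have hl0 : p 0 0 ≠ 0 := by simpa [olpIdx] using hlead 0
  have ho := horth n 0
  rw [if_neg hn, h0, hn'] at ho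
  simp only [lval_single, zpow_zero, mul_one] at ho
  rw [integral_mul_const, integral_const_mul] at ho
  simpa [hlead n, hl0] using ho

theorem eq_haar_of_eigen {μ : Measure Circle} [IsProbabilityMeasure μ]
    {p : ℕ → (ℤ →₀ ℂ)} (hp : IsOLP μ p) {D₀ D₁ D₂ : ℤ →₀ ℂ} {lam : ℕ → ℂ}
    (hD : D₁ ≠ 0 ∨ D₂ ≠ 0)
    (heig : ∀ n : ℕ, ∀ z : ℂ, z ≠ 0 → lval D₀ z * lval (p n) z
      + lval D₁ z * iteratedDeriv 1 (lval (p n)) z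
      + lval D₂ z * iteratedDeriv 2 (lval (p n)) z = lam n * lval (p n) z) :
    μ = Measure.haarMeasure ⊤ := by
  have hco := fun n => coeff_eq_of_eigen (heig n)
  have hmom : ∀ m : ℕ, ∫ z : Circle, (z : ℂ) ^ (m + 1 : ℤ) ∂μ = 0 := by
    intro m
    rcases monomial_side hD hp.2.1 hp.2.2 hco with h | h
    · have := moment_of_monomial hp (n := 2 * (m + 1)) (by lia)
        (fun l hl => h _ l (by rwa [olpIdx_even] at hl))
      rw [olpIdx_even] at this
      exact_mod_cast this
    · have := moment_of_monomial hp (n := 2 * m + 1) (by lia)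
        (fun l hl => h _ l (by rwa [olpIdx_odd] at hl))
      rw [olpIdx_odd] at this
      simpa only [neg_neg] using moment_neg μ this
  refine eq_haar_of_moments fun n hn => ?_
  rcases lt_or_gt_of_ne hn with h | h
  · obtain ⟨m, rfl⟩ : ∃ m : ℕ, n = -(m + 1 : ℤ) := ⟨(-n - 1).toNat, by lia⟩
    exact moment_neg μ (hmom m)
  · obtain ⟨m, rfl⟩ : ∃ m : ℕ, n = (m + 1 : ℤ) := ⟨(n - 1).toNat, by lia⟩
    exact hmom m

/-- Bochner-type theorem on the unit circle for operators of order at most two: if the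
orthonormal Laurent polynomials of `μ` are eigenfunctions of a linear differential
operator of order `r` with `1 ≤ r ≤ 2` and Laurent polynomial coefficients, then `μ` is
the Haar probability measure on the circle. -/
theorem olp_bispectral_order_two_haar
    (μ : Measure Circle) (hμ : IsProbabilityMeasure μ)
    (p : ℕ → (ℤ →₀ ℂ)) (hp : IsOLP μ p)
    (r : ℕ) (hr1 : 1 ≤ r) (hr2 : r ≤ 2) (D : ℕ → (ℤ →₀ ℂ)) (hD : D r ≠ 0)
    (lam : ℕ → ℂ)
    (heig : ∀ n : ℕ, ∀ z : ℂ, z ≠ 0 →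
      ∑ k ∈ Finset.range (r + 1), lval (D k) z * iteratedDeriv k (lval (p n)) z
        = lam n * lval (p n) z) :
    μ = Measure.haarMeasure ⊤ := by
  have := hμ
  obtain rfl | rfl : r = 1 ∨ r = 2 := by lia
  · refine eq_haar_of_eigen hp (D₀ := D 0) (D₁ := D 1) (D₂ := 0) (lam := lam) (Or.inl hD) ?_
    intro n z hz
    have := heig n z hz
    simpa [Finset.sum_range_succ, lval.eq_def 0] using this
  · refine eq_haar_of_eigen hp (D₀ := D 0) (D₁ := D 1) (D₂ := D 2) (lam := lam) (Or.inr hD) ?_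
    intro n z hz
    have := heig n z hz
    simpa [Finset.sum_range_succ] using this
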